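/- arXiv:2009.00315 — 2 statements merged into one kernel-verified Lean document; each statement's English description precedes it below -/
import Mathlib

section
/- The set {⌜η⌝ : ℕ ⊨ η} of Gödel codes of true arithmetical sentences is not definable in ℕ by any arithmetical formula. -/
open FirstOrder Language

/-- Function symbols of the language of arithmetic: 0, 1, +, ×. -/
inductive ArithFunc : ℕ → Type
  | zero : ArithFunc 0
  | one : ArithFunc 0
  | add : ArithFunc 2
  | mul : ArithFunc 2

/-- Relation symbols of the language of arithmetic: <. -/
inductive ArithRel : ℕ → Type
  | lt : ArithRel 2

/-- The first-order language of arithmetic. -/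
def LA : FirstOrder.Language := ⟨ArithFunc, ArithRel⟩

/-- The standard model ℕ of arithmetic. -/
instance : LA.Structure ℕ where
  funMap := fun {_} f => match f with
    | .zero => fun _ => 0
    | .one => fun _ => 1
    | .add => fun v => v 0 + v 1
    | .mul => fun v => v 0 * v 1
  RelMap := fun {_} r => match r with
    | .lt => fun v => v 0 < v 1

instance : Encodable (Σ n, LA.Functions n) :=
  Encodable.ofEquiv (Fin 4)
    { toFun := fun f => match f with
        | ⟨0, .zero⟩ => 0
        | ⟨0, .one⟩ => 1
        | ⟨2, .add⟩ => 2
        | ⟨2, .mul⟩ => 3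
      invFun := fun i => match i with
        | 0 => ⟨0, .zero⟩
        | 1 => ⟨0, .one⟩
        | 2 => ⟨2, .add⟩
        | 3 => ⟨2, .mul⟩
      left_inv := by rintro ⟨n, f⟩ <;> cases f <;> rfl
      right_inv := by intro i; fin_cases i <;> rfl }

instance : Encodable (Σ n, LA.Relations n) :=
  Encodable.ofEquiv (Fin 1)
    { toFun := fun f => match f with
        | ⟨2, .lt⟩ => 0
      invFun := fun _ => ⟨2, .lt⟩
      left_inv := by rintro ⟨n, r⟩; cases r; rfl
      right_inv := by intro i; fin_cases i; rfl }

/-- A canonical (computable, injective) Gödel numbering `⌜·⌝` of sentences,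
via Mathlib's list encoding of first-order formulas. -/
def godelCode (φ : LA.Sentence) : ℕ :=
  Encodable.encode φ.listEncode

/-- The numeral `n̄`: `0̄ = 0`, `1̄ = 1`, `(m+1)̄ = 1 + m̄`. -/
def numeral (α : Type) : ℕ → LA.Term α
  | 0 => Constants.term ArithFunc.zero
  | 1 => Constants.term ArithFunc.one
  | n + 2 => Functions.apply₂ (L := LA) ArithFunc.add
      (Constants.term ArithFunc.one) (numeral α (n + 1))

/-- `ℕ ⊨ Ψ(⌜θ⌝)`: the formula `Ψ(x)` holds in the standard model ℕ at the
Gödel code of the sentence `θ`. -/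
def RealizeAtCode (Ψ : LA.Formula (Fin 1)) (θ : LA.Sentence) : Prop :=
  Ψ.Realize (M := ℕ) (fun _ => (godelCode θ : ℕ))

/-- A theory is consistent iff it does not prove (have as a consequence) falsum. -/
def Consistent (T : LA.Theory) : Prop :=
  ¬ (T ⊨ᵇ (⊥ : LA.Sentence))

/-- The sentence `Ψ(⌜θ⌝) ↔ θ`. -/
def diagBicond (Ψ : LA.Formula (Fin 1)) (θ : LA.Sentence) : LA.Sentence :=
  (Ψ.subst (fun _ => numeral Empty (godelCode θ))) ⇔ θ

/-- The term `t + 1` (successor). -/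
def succT {α : Type} {n : ℕ} (t : LA.Term (α ⊕ Fin n)) : LA.Term (α ⊕ Fin n) :=
  Functions.apply₂ (L := LA) ArithFunc.add t (Constants.term ArithFunc.one)

/-- The term `0`. -/
def zeroT {α : Type} {n : ℕ} : LA.Term (α ⊕ Fin n) := Constants.term (L := LA) ArithFunc.zero

/-- The term `t + s`. -/
def addT {α : Type} {n : ℕ} (t s : LA.Term (α ⊕ Fin n)) : LA.Term (α ⊕ Fin n) :=
  Functions.apply₂ (L := LA) ArithFunc.add t s

/-- The term `t * s`. -/
def mulT {α : Type} {n : ℕ} (t s : LA.Term (α ⊕ Fin n)) : LA.Term (α ⊕ Fin n) :=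
  Functions.apply₂ (L := LA) ArithFunc.mul t s

/-- The atomic formula `t < s`. -/
def ltF {α : Type} {n : ℕ} (t s : LA.Term (α ⊕ Fin n)) : LA.BoundedFormula α n :=
  Relations.boundedFormula₂ (L := LA) ArithRel.lt t s

/-- Robinson's arithmetic Q. -/
def Q : LA.Theory :=
  { ∀' ∼(succT &0 =' zeroT),
    ∀' ∀' (succT &0 =' succT &1 ⟹ &0 =' &1),
    ∀' (∼(&0 =' zeroT) ⟹ ∃' (&0 =' succT &1)),
    ∀' (addT &0 zeroT =' &0),
    ∀' ∀' (addT &0 (succT &1) =' succT (addT &0 &1)),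
    ∀' (mulT &0 zeroT =' zeroT),
    ∀' ∀' (mulT &0 (succT &1) =' addT (mulT &0 &1) &0),
    ∀' ∀' (ltF &0 &1 ⇔ ∃' (addT &0 (succT &2) =' &1)) }

/-- A theory is recursively enumerable iff its set of Gödel codes is the domain
of a partial recursive function. -/
def RETheory (T : LA.Theory) : Prop :=
  ∃ f : ℕ →. Unit, Partrec f ∧ ∀ φ : LA.Sentence, φ ∈ T ↔ (f (godelCode φ)).Dom

/-!
Every primitive recursive function is arithmetically definable: by Gödel's `β` function, the course
of values of a recursion is coded by a single number, so the recursion becomes an existential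
statement about that number. The map sending the code `a` of a formula `φ(x)` to the code of the
sentence `φ(ā)` is primitive recursive. Hence for any formula `Ψ(x)` there is a formula `φ(x)` which
says that `Ψ` holds at the code of the instance of the formula coded by `x` at its own code; the
instance of `φ` at its own code is then a sentence `θ` with `ℕ ⊨ θ ↔ Ψ(⌜θ⌝)`. If `Γ` defined truth,
this fixed point for `Ψ = ¬Γ` would be a liar sentence.
-/

section Composition

variable {L : FirstOrder.Language} {M : Type*} [L.Structure M] {A : Set M} {α : Type*}

theorem definable_relMap {n : ℕ} (R : L.Relations n) :
    A.Definable L {v : Fin n → M | Structure.RelMap R v} := by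
  refine (Set.empty_definable_iff.2 ⟨R.formula Term.var, ?_⟩).mono A.empty_subset
  ext v
  exact (Formula.realize_rel (R := R) (ts := Term.var)).symm

theorem definable_exists {P : M → (α → M) → Prop}
    (hP : A.Definable L {w : Option α → M | P (w none) (w ∘ some)}) :
    A.Definable L {v : α → M | ∃ x, P x v} := by
  convert (hP.preimage_comp fun i => i.elim (Sum.inr ()) Sum.inl).exists_of_finite using 1
  ext v
  simp [Function.comp_def, (Equiv.funUnique Unit M).symm.exists_congr_left]

theorem definable_forall {P : M → (α → M) → Prop}
    (hP : A.Definable L {w : Option α → M | P (w none) (w ∘ some)}) :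
    A.Definable L {v : α → M | ∀ x, P x v} := by
  convert (definable_exists (P := fun x v => ¬P x v) hP.compl).compl using 1
  ext v
  simp

theorem definableFun_comp₁ {F : M → M} {f : (α → M) → M}
    (hF : A.DefinableFun L fun v : Fin 1 → M => F (v 0)) (hf : A.DefinableFun L f) :
    A.DefinableFun L fun v => F (f v) :=
  Set.DefinableFun.comp (g := fun v => ![f v]) (Fin.forall_fin_one.2 hf) hF

theorem definableFun_comp₂ {F : M → M → M} {f g : (α → M) → M}
    (hF : A.DefinableFun L fun v : Fin 2 → M => F (v 0) (v 1))
    (hf : A.DefinableFun L f) (hg : A.DefinableFun L g) :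
    A.DefinableFun L fun v => F (f v) (g v) :=
  Set.DefinableFun.comp (g := fun v => ![f v, g v]) (Fin.forall_fin_two.2 ⟨hf, hg⟩) hF

theorem definableFun_comp₃ {F : M → M → M → M} {f g h : (α → M) → M}
    (hF : A.DefinableFun L fun v : Fin 3 → M => F (v 0) (v 1) (v 2))
    (hf : A.DefinableFun L f) (hg : A.DefinableFun L g) (hh : A.DefinableFun L h) :
    A.DefinableFun L fun v => F (f v) (g v) (h v) :=
  Set.DefinableFun.comp (g := fun v => ![f v, g v, h v])
    (Fin.forall_fin_succ.2 ⟨hf, Fin.forall_fin_two.2 ⟨hg, hh⟩⟩) hF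

end Composition

section Arithmetic

variable {A : Set ℕ} {α : Type} {f g : (α → ℕ) → ℕ}

theorem realize_numeral (v : α → ℕ) (n : ℕ) : (numeral α n).realize v = n := by
  induction n using numeral.induct with
  | case1 => exact Term.realize_constants
  | case2 => exact Term.realize_constants
  | case3 n ih =>
    calc (numeral α (n + 2)).realize v = 1 + (numeral α (n + 1)).realize v :=
          Term.realize_functions_apply₂
      _ = n + 2 := by rw [ih]; omega

theorem definableFun_const (n : ℕ) : A.DefinableFun LA fun _ : α → ℕ => n := by
  simpa only [realize_numeral] using (numeral α n).definableFun_realize.of_empty (A := A)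

theorem definableFun_add (hf : A.DefinableFun LA f) (hg : A.DefinableFun LA g) :
    A.DefinableFun LA fun v => f v + g v :=
  definableFun_comp₂ (Set.DefinableFun.fun_symbol (L := LA) ArithFunc.add).of_empty hf hg

theorem definableFun_mul (hf : A.DefinableFun LA f) (hg : A.DefinableFun LA g) :
    A.DefinableFun LA fun v => f v * g v :=
  definableFun_comp₂ (Set.DefinableFun.fun_symbol (L := LA) ArithFunc.mul).of_empty hf hg

theorem definable_lt (hf : A.DefinableFun LA f) (hg : A.DefinableFun LA g) :
    A.Definable LA {v | f v < g v} :=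
  (definable_relMap (L := LA) ArithRel.lt).preimage_map (F := fun v => ![f v, g v])
    (Fin.forall_fin_two.2 ⟨hf, hg⟩)

theorem definableFun_mod (hf : A.DefinableFun LA f) (hg : A.DefinableFun LA g) :
    A.DefinableFun LA fun v => f v % g v := by
  refine definableFun_comp₂ ?_ hf hg
  have h : A.Definable LA {w : Option (Fin 2) → ℕ |
      (w (some 1) = 0 ∧ w (some 0) = w none) ∨
        (w none < w (some 1) ∧ ∃ q, w (some 0) = w (some 1) * q + w none)} := by
    refine .union (.inter ?_ ?_) (.inter (definable_lt (.proj LA) (.proj LA)) (definable_exists ?_))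
    · exact (Set.DefinableFun.proj LA).ofPred_eq (definableFun_const 0)
    · exact (Set.DefinableFun.proj LA).ofPred_eq (.proj LA)
    · exact (Set.DefinableFun.proj LA).ofPred_eq
        (definableFun_add (definableFun_mul (.proj LA) (.proj LA)) (.proj LA))
  simpa only [← Nat.mod_eq_iff] using! h

theorem definableFun_pair (hf : A.DefinableFun LA f) (hg : A.DefinableFun LA g) :
    A.DefinableFun LA fun v => Nat.pair (f v) (g v) :=
  .ite (definable_lt hf hg) (definableFun_add (definableFun_mul hg hg) hf)
    (definableFun_add (definableFun_add (definableFun_mul hf hf) hf) hg)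

theorem unpair_fst_eq_iff_exists {n a : ℕ} : n.unpair.1 = a ↔ ∃ b, Nat.pair a b = n := by
  constructor
  · rintro rfl
    exact ⟨n.unpair.2, n.pair_unpair⟩
  · rintro ⟨b, rfl⟩
    rw [Nat.unpair_pair]

theorem unpair_snd_eq_iff_exists {n b : ℕ} : n.unpair.2 = b ↔ ∃ a, Nat.pair a b = n := by
  constructor
  · rintro rfl
    exact ⟨n.unpair.1, n.pair_unpair⟩
  · rintro ⟨a, rfl⟩
    rw [Nat.unpair_pair]

theorem definableFun_unpair_fst (hf : A.DefinableFun LA f) :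
    A.DefinableFun LA fun v => (f v).unpair.1 := by
  refine definableFun_comp₁ (F := fun n => n.unpair.1) ?_ hf
  have h : A.Definable LA {w : Option (Fin 1) → ℕ | ∃ b, Nat.pair (w none) b = w (some 0)} :=
    definable_exists ((definableFun_pair (.proj LA) (.proj LA)).ofPred_eq (.proj LA))
  simpa only [← unpair_fst_eq_iff_exists] using! h

theorem definableFun_unpair_snd (hf : A.DefinableFun LA f) :
    A.DefinableFun LA fun v => (f v).unpair.2 := by
  refine definableFun_comp₁ (F := fun n => n.unpair.2) ?_ hf
  have h : A.Definable LA {w : Option (Fin 1) → ℕ | ∃ a, Nat.pair a (w none) = w (some 0)} :=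
    definable_exists ((definableFun_pair (.proj LA) (.proj LA)).ofPred_eq (.proj LA))
  simpa only [← unpair_snd_eq_iff_exists] using! h

theorem definableFun_beta (hf : A.DefinableFun LA f) (hg : A.DefinableFun LA g) :
    A.DefinableFun LA fun v => Nat.beta (f v) (g v) :=
  have hsucc : A.DefinableFun LA fun v => g v + 1 := definableFun_add hg (definableFun_const 1)
  definableFun_mod (definableFun_unpair_fst hf)
    (definableFun_add (definableFun_mul hsucc (definableFun_unpair_snd hf)) (definableFun_const 1))

theorem exists_beta_eq (s : ℕ → ℕ) (n : ℕ) : ∃ c, ∀ i ≤ n, Nat.beta c i = s i := by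
  refine ⟨Nat.unbeta ((List.range (n + 1)).map s), fun i hi => ?_⟩
  simpa using Nat.beta_unbeta_coe ((List.range (n + 1)).map s) ⟨i, by simpa using by omega⟩

theorem natRec_eq_iff_exists_beta {a n r : ℕ} {g : ℕ → ℕ → ℕ} :
    Nat.rec a g n = r ↔ ∃ c, Nat.beta c 0 = a ∧
      (∀ i, i < n → Nat.beta c (i + 1) = g i (Nat.beta c i)) ∧ Nat.beta c n = r := by
  constructor
  · rintro rfl
    obtain ⟨c, hc⟩ := exists_beta_eq (Nat.rec a g) n
    exact ⟨c, hc 0 n.zero_le, fun i hi => by rw [hc _ hi, hc _ hi.le], hc n le_rfl⟩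
  · rintro ⟨c, hzero, hsucc, rfl⟩
    have hc : ∀ i ≤ n, Nat.beta c i = Nat.rec a g i := fun i hi => by
      induction i with
      | zero => exact hzero
      | succ i ih => rw [hsucc i hi, ih (by omega)]
    exact (hc n le_rfl).symm

theorem definableFun_natRec {F : ℕ → ℕ} {G : ℕ → ℕ → ℕ → ℕ}
    (hF : A.DefinableFun LA fun v : Fin 1 → ℕ => F (v 0))
    (hG : A.DefinableFun LA fun v : Fin 3 → ℕ => G (v 0) (v 1) (v 2))
    (hf : A.DefinableFun LA f) (hg : A.DefinableFun LA g) :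
    A.DefinableFun LA fun v => Nat.rec (F (f v)) (G (f v)) (g v) := by
  refine definableFun_comp₂ (F := fun a n => Nat.rec (F a) (G a) n) ?_ hf hg
  have h : A.Definable LA {w : Option (Fin 2) → ℕ | ∃ c, Nat.beta c 0 = F (w (some 0)) ∧
      (∀ i, i < w (some 1) → Nat.beta c (i + 1) = G (w (some 0)) i (Nat.beta c i)) ∧
      Nat.beta c (w (some 1)) = w none} := by
    refine definable_exists (.inter ?zero (.inter (definable_forall (.himp ?lt ?succ)) ?last))
    case zero =>
      exact (definableFun_beta (.proj LA) (definableFun_const 0)).ofPred_eq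
        (definableFun_comp₁ hF (.proj LA))
    case lt => exact definable_lt (.proj LA) (.proj LA)
    case succ =>
      exact (definableFun_beta (.proj LA)
        (definableFun_add (.proj LA) (definableFun_const 1))).ofPred_eq
        (definableFun_comp₃ hG (.proj LA) (.proj LA) (definableFun_beta (.proj LA) (.proj LA)))
    case last => exact (definableFun_beta (.proj LA) (.proj LA)).ofPred_eq (.proj LA)
  simpa only [← natRec_eq_iff_exists_beta] using! h

theorem definableFun_of_natPrimrec {F : ℕ → ℕ} (hF : Nat.Primrec F) :
    A.DefinableFun LA fun v : Fin 1 → ℕ => F (v 0) := by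
  induction hF with
  | zero => exact definableFun_const 0
  | succ => exact definableFun_add (.proj LA) (definableFun_const 1)
  | left => exact definableFun_unpair_fst (.proj LA)
  | right => exact definableFun_unpair_snd (.proj LA)
  | pair _ _ ihf ihg => exact definableFun_pair ihf ihg
  | comp _ _ ihf ihg => exact definableFun_comp₁ ihf ihg
  | @prec F G _ _ ihF ihG =>
    have hG : A.DefinableFun LA fun v : Fin 3 → ℕ => G (Nat.pair (v 0) (Nat.pair (v 1) (v 2))) :=
      definableFun_comp₁ ihG
        (definableFun_pair (.proj LA) (definableFun_pair (.proj LA) (.proj LA)))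
    exact definableFun_natRec (G := fun a y r => G (Nat.pair a (Nat.pair y r))) ihF hG
      (definableFun_unpair_fst (.proj LA)) (definableFun_unpair_snd (.proj LA))

end Arithmetic

theorem encode_numeral_add_two (α : Type) [Encodable α] (n : ℕ) :
    Encodable.encode (numeral α (n + 2)) =
      (Nat.pair (Encodable.encode (Sum.inr ⟨2, .add⟩ : α ⊕ Σ i, LA.Functions i))
        (Nat.pair (Encodable.encode (Sum.inr ⟨0, .one⟩ : α ⊕ Σ i, LA.Functions i))
          (Encodable.encode (numeral α (n + 1)))).succ).succ := by
  have hlist : (numeral α (n + 2)).listEncode =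
      Sum.inr ⟨2, .add⟩ :: Sum.inr ⟨0, .one⟩ :: ((numeral α (n + 1)).listEncode ++ []) := rfl
  change Encodable.encode (numeral α (n + 2)).listEncode = _
  rw [hlist, List.append_nil, Encodable.encode_list_cons, Encodable.encode_list_cons]
  rfl

theorem primrec_encode_numeral (α : Type) [Encodable α] :
    Primrec fun n => Encodable.encode (numeral α n) := by
  have hstep : Primrec₂ fun _ r : ℕ =>
      (Nat.pair (Encodable.encode (Sum.inr ⟨2, .add⟩ : α ⊕ Σ i, LA.Functions i))
        (Nat.pair (Encodable.encode (Sum.inr ⟨0, .one⟩ : α ⊕ Σ i, LA.Functions i)) r).succ).succ :=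
    Primrec.succ.comp₂ (Primrec₂.natPair.comp₂ (.const _)
      (Primrec.succ.comp₂ (Primrec₂.natPair.comp₂ (.const _) .right)))
  refine (Primrec.nat_casesOn₁ (Encodable.encode (numeral α 0))
    (Primrec.nat_rec₁ (Encodable.encode (numeral α 1)) hstep)).of_eq fun n => ?_
  obtain _ | n := n
  · rfl
  · induction n with
    | zero => rfl
    | succ n ih => rw [encode_numeral_add_two, ← ih]

/-- The sentence `∀ x, x = n̄ → φ x`. It stands in for the substitution instance `φ(n̄)`, to which
it is equivalent, because its code is obtained from the code of `φ` by prefixing finitely many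
symbols. -/
def numeralInstance (φ : LA.BoundedFormula Empty 1) (n : ℕ) : LA.Sentence :=
  ∀' ((&0 =' numeral (Empty ⊕ Fin 1) n) ⟹ φ)

theorem realize_numeralInstance (φ : LA.BoundedFormula Empty 1) (n : ℕ) (v : Empty → ℕ) :
    ℕ ⊨ numeralInstance φ n ↔ φ.Realize v fun _ => n := by
  have hsnoc (xs : Fin 0 → ℕ) (x : ℕ) : (Fin.snoc xs x : Fin 1 → ℕ) = fun _ => x := by
    ext i
    simp [Fin.snoc]
  rw [Unique.eq_default v]
  simp only [numeralInstance, Sentence.Realize, Formula.Realize, BoundedFormula.realize_all,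
    BoundedFormula.realize_imp, BoundedFormula.realize_bdEqual, realize_numeral, hsnoc,
    Function.comp_apply, Term.realize_var, Sum.elim_inr, forall_eq]

/-- The code of `numeralInstance φ n` as a function of the code `a` of `φ` and of `n`: the symbols
`∀`, `→` and the two sides of the equation `x = n̄` are prefixed to the list coded by `a`. -/
def numeralInstanceCode (a n : ℕ) : ℕ :=
  let Symbol := (Σ k, LA.Term (Empty ⊕ Fin k)) ⊕ ((Σ k, LA.Relations k) ⊕ ℕ)
  (Nat.pair (Encodable.encode (Sum.inr (Sum.inr 1) : Symbol))
    (Nat.pair (Encodable.encode (Sum.inr (Sum.inr 0) : Symbol))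
      (Nat.pair (Encodable.encode (Sum.inl ⟨1, &0⟩ : Symbol))
        (Nat.pair (Encodable.encode (Sum.inl ⟨1, numeral _ n⟩ : Symbol)) a).succ).succ).succ).succ

theorem godelCode_numeralInstance (φ : LA.BoundedFormula Empty 1) (n : ℕ) :
    godelCode (numeralInstance φ n) = numeralInstanceCode (Encodable.encode φ.listEncode) n :=
  rfl

theorem primrec₂_numeralInstanceCode : Primrec₂ numeralInstanceCode := by
  have hnumeral : Primrec₂ fun _ n : ℕ => Encodable.encode
      (Sum.inl ⟨1, numeral _ n⟩ :
        (Σ k, LA.Term (Empty ⊕ Fin k)) ⊕ ((Σ k, LA.Relations k) ⊕ ℕ)) :=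
    Primrec.nat_mul.comp₂ (.const 2) (Primrec₂.natPair.comp₂ (.const 1)
      ((primrec_encode_numeral _).comp₂ .right))
  exact Primrec.succ.comp₂ <| Primrec₂.natPair.comp₂ (.const _) <|
    Primrec.succ.comp₂ <| Primrec₂.natPair.comp₂ (.const _) <|
    Primrec.succ.comp₂ <| Primrec₂.natPair.comp₂ (.const _) <|
    Primrec.succ.comp₂ <| Primrec₂.natPair.comp₂ hnumeral .left

theorem godelCode_injective : Function.Injective godelCode :=
  Encodable.encode_injective.comp <|
    BoundedFormula.listEncode_sigma_injective.comp (sigma_mk_injective (i := 0))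

theorem exists_realize_iff_realizeAtCode (Ψ : LA.Formula (Fin 1)) :
    ∃ θ : LA.Sentence, ℕ ⊨ θ ↔ RealizeAtCode Ψ θ := by
  let diagonal (n : ℕ) : ℕ := numeralInstanceCode n n
  have hdiagonal : Primrec diagonal := primrec₂_numeralInstanceCode.comp .id .id
  have hdef : (∅ : Set ℕ).Definable LA {v : Fin 1 → ℕ | Ψ.Realize fun _ => diagonal (v 0)} :=
    (Set.empty_definable_iff.2 ⟨Ψ, rfl⟩).preimage_map (F := fun v _ => diagonal (v 0)) fun _ =>
      definableFun_of_natPrimrec (Primrec.nat_iff.1 hdiagonal)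
  obtain ⟨χ, hχ⟩ := Set.empty_definable_iff.1 hdef
  let φ : LA.BoundedFormula Empty 1 := BoundedFormula.relabel Sum.inr χ
  let a := Encodable.encode φ.listEncode
  refine ⟨numeralInstance φ a, ?_⟩
  calc ℕ ⊨ numeralInstance φ a ↔ χ.Realize fun _ => a :=
        (realize_numeralInstance φ a default).trans (Formula.realize_relabel_sumInr χ)
    _ ↔ Ψ.Realize fun _ => diagonal a := (Set.ext_iff.1 hχ fun _ => a).symm
    _ ↔ RealizeAtCode Ψ (numeralInstance φ a) := by
      rw [RealizeAtCode, godelCode_numeralInstance]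

/-- **Tarski's Undefinability Theorem (semantic form).** The set
`{⌜η⌝ : ℕ ⊨ η}` of Gödel codes of true sentences is not definable in ℕ. -/
theorem stmt1 :
    ¬ ∃ Γ : LA.Formula (Fin 1), ∀ n : ℕ,
      ((∃ η : LA.Sentence, godelCode η = n ∧ ℕ ⊨ η) ↔ Γ.Realize (M := ℕ) (fun _ => n)) := by
  rintro ⟨Γ, hΓ⟩
  obtain ⟨θ, hθ⟩ := exists_realize_iff_realizeAtCode ∼Γ
  have hfalse : ℕ ⊨ θ ↔ ¬RealizeAtCode Γ θ := hθ.trans Formula.realize_not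
  have htrue : RealizeAtCode Γ θ ↔ ℕ ⊨ θ := by
    rw [RealizeAtCode, ← hΓ]
    simp [godelCode_injective.eq_iff]
  exact iff_not_self (htrue.trans hfalse)
end

section
/- If T is a consistent extension of Robinson's arithmetic, then for no formula Ψ(x) does T contain the set TB^Ψ = {Ψ(⌜β⌝) ↔ β : β a sentence} of all truth biconditionals. -/
open FirstOrder Language

/-!
The proof is the diagonal argument, carried out semantically in the models of `T`. Every model of
`Q` is a model of the theory `R`. The sentence saying that `φ` holds of the code of `φ` is
`∀ x, (x = n̄ → φ)`, where `n` is the code of `φ`; its code is a polynomial in `n` and the code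
of the numeral `n̄`, and the latter is an `n`-th iterate of a polynomial. Gödel's β-function gives a
bounded formula for the graph of such an iteration, and choosing the least witness of that formula
makes the graph functional in every model of `R`, nonstandard elements included. So for each formula
`Φ(x)` there is a sentence `β` that is equivalent to `Φ(⌜β⌝)` in all models of `R`; taking `∼Ψ` for
`Φ` contradicts the biconditional `Ψ(⌜β⌝) ↔ β`.
-/

namespace Tarski

/-- The axioms of Robinson's arithmetic without those for `<`, as properties of algebraic
operations. -/
class RobinsonArith (M : Type*) [Zero M] [One M] [Add M] [Mul M] : Prop where
  add_one_ne_zero (x : M) : x + 1 ≠ 0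
  add_one_cancel (x y : M) : x + 1 = y + 1 → x = y
  exists_eq_add_one (x : M) : x ≠ 0 → ∃ y, x = y + 1
  add_zero (x : M) : x + 0 = x
  add_add_one (x y : M) : x + (y + 1) = x + y + 1
  mul_zero (x : M) : x * 0 = 0
  mul_add_one (x y : M) : x * (y + 1) = x * y + x

namespace RobinsonArith

open Nat (unaryCast)

variable {M : Type*} [Zero M] [One M] [Add M] [Mul M] [RobinsonArith M]

theorem zero_add_one : (0 + 1 : M) = 1 := by
  have one_ne_zero : (1 : M) ≠ 0 := fun h ↦
    add_one_ne_zero (0 : M) (by rw [h, add_zero])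
  obtain ⟨y, hy⟩ := exists_eq_add_one _ one_ne_zero
  have add_y (x : M) : x + y = x := add_one_cancel _ _ (by rw [← add_add_one, ← hy])
  by_cases hy0 : y = 0
  · rw [hy0] at hy
    exact hy.symm
  · obtain ⟨z, rfl⟩ := exists_eq_add_one _ hy0
    exact absurd ((add_add_one 0 z).symm.trans (add_y 0)) (add_one_ne_zero _)

theorem unaryCast_add (m n : ℕ) : unaryCast (m + n) = (unaryCast m + unaryCast n : M) := by
  induction n with
  | zero => exact (add_zero _).symm
  | succ n ih => rw [← Nat.add_assoc, unaryCast, unaryCast, add_add_one, ih]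

theorem unaryCast_mul (m n : ℕ) : unaryCast (m * n) = (unaryCast m * unaryCast n : M) := by
  induction n with
  | zero => exact (mul_zero _).symm
  | succ n ih => rw [Nat.mul_succ, unaryCast_add, unaryCast, mul_add_one, ih]

theorem one_add_unaryCast (n : ℕ) : (1 + unaryCast n : M) = unaryCast (n + 1) := by
  rw [Nat.add_comm, unaryCast_add, unaryCast, unaryCast, zero_add_one]

theorem unaryCast_injective : Function.Injective (unaryCast : ℕ → M) := by
  intro m
  induction m with
  | zero =>
    rintro (_ | n) h
    · rfl
    · exact absurd h.symm (add_one_ne_zero _)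
  | succ m ih =>
    rintro (_ | n) h
    · exact absurd h (add_one_ne_zero _)
    · rw [ih (add_one_cancel _ _ h)]

theorem exists_eq_unaryCast_of_add_eq {n : ℕ} {x z : M} (h : z + x = unaryCast n) :
    ∃ m ≤ n, x = unaryCast m := by
  induction n generalizing x with
  | zero =>
    refine ⟨0, le_rfl, by_contra fun hx ↦ ?_⟩
    obtain ⟨y, rfl⟩ := exists_eq_add_one _ hx
    exact add_one_ne_zero _ ((add_add_one z y).symm.trans h)
  | succ n ih =>
    by_cases hx : x = 0
    · exact ⟨0, Nat.zero_le _, hx⟩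
    · obtain ⟨y, rfl⟩ := exists_eq_add_one _ hx
      obtain ⟨m, hm, rfl⟩ := ih (add_one_cancel _ _ ((add_add_one z y).symm.trans h))
      exact ⟨m + 1, Nat.succ_le_succ hm, rfl⟩

theorem exists_add_eq_unaryCast_or (x : M) (n : ℕ) :
    (∃ z, z + x = unaryCast n) ∨ ∃ z, z + unaryCast n = x := by
  induction n generalizing x with
  | zero => exact Or.inr ⟨x, add_zero x⟩
  | succ n ih =>
    by_cases hx : x = 0
    · exact Or.inl ⟨unaryCast (n + 1), by rw [hx, add_zero]⟩
    · obtain ⟨y, rfl⟩ := exists_eq_add_one _ hx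
      refine (ih y).imp ?_ ?_ <;> rintro ⟨z, hz⟩ <;> exact ⟨z, by rw [unaryCast, add_add_one, hz]⟩

end RobinsonArith

section Structures

/-- The value in `M` of the `n`-th numeral. -/
def num (M : Type*) [LA.Structure M] (n : ℕ) : M :=
  (numeral Empty n).realize Empty.elim

variable {M : Type*} [LA.Structure M]

/-- The interpretation of `+` in a structure. -/
def plus (x y : M) : M :=
  Structure.funMap (L := LA) ArithFunc.add ![x, y]

/-- The interpretation of `×` in a structure. -/
def times (x y : M) : M :=
  Structure.funMap (L := LA) ArithFunc.mul ![x, y]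

/-- The order in which quantifiers are bounded. The summands are ordered so that `Q` proves every
element comparable with every numeral; for `∃ z, x + z = y` it does not. -/
def Le (x y : M) : Prop :=
  ∃ z, plus z x = y

variable (M) in
/-- Models of the Tarski–Mostowski–Robinson theory `R`: on numerals the operations are computed
correctly, and the numerals are pairwise distinct and form an initial segment that is comparable
with every element. -/
class ModelsR : Prop where
  plus_num (m n : ℕ) : plus (num M m) (num M n) = num M (m + n)
  times_num (m n : ℕ) : times (num M m) (num M n) = num M (m * n)
  num_injective : Function.Injective (num M)
  exists_eq_num_of_le {n : ℕ} {x : M} : Le x (num M n) → ∃ m ≤ n, x = num M m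
  le_total (x : M) (n : ℕ) : Le x (num M n) ∨ Le (num M n) x

theorem num_add_two (n : ℕ) : num M (n + 2) = plus (num M 1) (num M (n + 1)) :=
  Term.realize_functions_apply₂ (L := LA)

variable {α : Type} {n : ℕ}

@[simp]
theorem realize_numeral (v : α → M) (n : ℕ) : (numeral α n).realize v = num M n := by
  have realize_one : (numeral α 1).realize v = num M 1 :=
    (Term.realize_constants (L := LA)).trans Term.realize_constants.symm
  induction n using numeral.induct with
  | case1 => exact (Term.realize_constants (L := LA)).trans Term.realize_constants.symm
  | case2 => exact realize_one
  | case3 n ih =>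
    rw [num_add_two, ← ih, ← realize_one]
    exact Term.realize_functions_apply₂ (L := LA)

section Terms

variable (v : α ⊕ Fin n → M) (t s : LA.Term (α ⊕ Fin n))

@[simp]
theorem realize_addT : (addT t s).realize v = plus (t.realize v) (s.realize v) :=
  Term.realize_functions_apply₂ (L := LA)

@[simp]
theorem realize_mulT : (mulT t s).realize v = times (t.realize v) (s.realize v) :=
  Term.realize_functions_apply₂ (L := LA)

@[simp]
theorem realize_succT : (succT t).realize v = plus (t.realize v) (num M 1) := by
  rw [← realize_numeral v]
  exact realize_addT v t _

@[simp]
theorem realize_zeroT : (zeroT : LA.Term (α ⊕ Fin n)).realize v = num M 0 :=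
  realize_numeral v 0

end Terms

theorem modelsR_of_models_Q (hQ : M ⊨ Q) : ModelsR M := by
  let : Zero M := ⟨num M 0⟩
  let : One M := ⟨num M 1⟩
  let : Add M := ⟨plus⟩
  let : Mul M := ⟨times⟩
  have plus_eq (x y : M) : plus x y = x + y := rfl
  have times_eq (x y : M) : times x y = x * y := rfl
  have num_zero : num M 0 = 0 := rfl
  have num_one : num M 1 = 1 := rfl
  have : RobinsonArith M := by
    simp only [Q, Theory.model_iff, Set.mem_insert_iff, Set.mem_singleton_iff, forall_eq_or_imp,
      forall_eq, Sentence.Realize, Formula.Realize] at hQ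
    obtain ⟨succ_ne_zero, succ_inj, exists_pred, add_zero, add_succ, mul_zero, mul_succ, -⟩ := hQ
    constructor
    · simpa [Fin.snoc, plus_eq, times_eq, num_zero, num_one] using succ_ne_zero
    · simpa [Fin.snoc, plus_eq, times_eq, num_zero, num_one] using succ_inj
    · simpa [Fin.snoc, plus_eq, times_eq, num_zero, num_one] using exists_pred
    · simpa [Fin.snoc, plus_eq, times_eq, num_zero, num_one] using add_zero
    · simpa [Fin.snoc, plus_eq, times_eq, num_zero, num_one] using add_succ
    · simpa [Fin.snoc, plus_eq, times_eq, num_zero, num_one] using mul_zero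
    · simpa [Fin.snoc, plus_eq, times_eq, num_zero, num_one] using mul_succ
  have num_eq : num M = Nat.unaryCast := by
    funext n
    induction n using numeral.induct with
    | case1 => rfl
    | case2 => exact RobinsonArith.zero_add_one.symm
    | case3 n ih => rw [← RobinsonArith.one_add_unaryCast, ← ih]; exact num_add_two n
  refine ⟨?_, ?_, ?_, ?_, ?_⟩ <;> rw [num_eq]
  · exact fun m n ↦ (RobinsonArith.unaryCast_add m n).symm
  · exact fun m n ↦ (RobinsonArith.unaryCast_mul m n).symm
  · exact RobinsonArith.unaryCast_injective
  · exact fun ⟨z, hz⟩ ↦ RobinsonArith.exists_eq_unaryCast_of_add_eq hz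
  · exact RobinsonArith.exists_add_eq_unaryCast_or

end Structures

section Formulas

variable {α : Type} {n : ℕ}

/-- The term `t` moved under one more quantifier. -/
def lift (t : LA.Term (α ⊕ Fin n)) : LA.Term (α ⊕ Fin (n + 1)) :=
  t.relabel (Sum.map id Fin.castSucc)

/-- A free variable as a term. -/
abbrev free (a : α) : LA.Term (α ⊕ Fin n) :=
  Term.var (Sum.inl a)

/-- The formula expressing `Le`. -/
def leF (t s : LA.Term (α ⊕ Fin n)) : LA.BoundedFormula α n :=
  ∃' (addT (Term.var (Sum.inr (Fin.last n))) (lift t) =' lift s)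

/-- The bounded quantifier `∃ x ≤ t`. -/
def exLe (t : LA.Term (α ⊕ Fin n)) (φ : LA.BoundedFormula α (n + 1)) : LA.BoundedFormula α n :=
  ∃' (leF (Term.var (Sum.inr (Fin.last n))) (lift t) ⊓ φ)

/-- The bounded quantifier `∀ x ≤ t`. -/
def allLe (t : LA.Term (α ⊕ Fin n)) (φ : LA.BoundedFormula α (n + 1)) : LA.BoundedFormula α n :=
  ∼(exLe t ∼φ)

/-- The formula obtained by substituting terms for all variables of `φ`. -/
def instantiate {β : Type} (φ : LA.Formula β) (f : β → LA.Term (α ⊕ Fin n)) :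
    LA.BoundedFormula α n :=
  (φ.subst f).relabel id

variable {M : Type*} [LA.Structure M] {v : α → M} {xs : Fin n → M}

@[simp]
theorem realize_lift (t : LA.Term (α ⊕ Fin n)) (x : M) :
    (lift t).realize (Sum.elim v (Fin.snoc xs x)) = t.realize (Sum.elim v xs) := by
  rw [lift, Term.realize_relabel, Sum.elim_comp_map, Function.comp_id, Fin.snoc_comp_castSucc]

@[simp]
theorem realize_leF (t s : LA.Term (α ⊕ Fin n)) :
    (leF t s).Realize v xs ↔ Le (t.realize (Sum.elim v xs)) (s.realize (Sum.elim v xs)) := by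
  simp [leF, Le]

@[simp]
theorem realize_exLe (t : LA.Term (α ⊕ Fin n)) (φ : LA.BoundedFormula α (n + 1)) :
    (exLe t φ).Realize v xs ↔
      ∃ x, Le x (t.realize (Sum.elim v xs)) ∧ φ.Realize v (Fin.snoc xs x) := by
  simp [exLe]

@[simp]
theorem realize_allLe (t : LA.Term (α ⊕ Fin n)) (φ : LA.BoundedFormula α (n + 1)) :
    (allLe t φ).Realize v xs ↔
      ∀ x, Le x (t.realize (Sum.elim v xs)) → φ.Realize v (Fin.snoc xs x) := by
  simp [allLe]

@[simp]
theorem realize_instantiate {β : Type} (φ : LA.Formula β) (f : β → LA.Term (α ⊕ Fin n)) :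
    (instantiate φ f).Realize v xs ↔ φ.Realize (Term.realize (Sum.elim v xs) ∘ f) := by
  rw [instantiate, BoundedFormula.realize_relabel, BoundedFormula.realize_subst]
  exact iff_of_eq (congrArg (BoundedFormula.Realize φ _) (Subsingleton.elim _ _))

end Formulas

section Standard

@[simp]
theorem num_nat (n : ℕ) : num ℕ n = n := by
  induction n using numeral.induct with
  | case1 | case2 => rfl
  | case3 n ih => rw [num_add_two, ih]; exact Nat.add_comm 1 (n + 1)

@[simp]
theorem plus_nat (m n : ℕ) : plus m n = m + n := rfl

@[simp]
theorem times_nat (m n : ℕ) : times m n = m * n := rfl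

@[simp]
theorem le_nat (m n : ℕ) : Le m n ↔ m ≤ n :=
  le_iff_exists_add'.trans (exists_congr fun _ ↦ eq_comm) |>.symm

end Standard

section Absoluteness

variable {α : Type} {n : ℕ} {M : Type*} [LA.Structure M]

variable (M) in
/-- A formula is absolute for `M` if its truth value at numbers is the same in `ℕ` and in `M`.
This semantic notion takes the place of the class of `Δ₀` formulas. -/
def IsAbsolute (φ : LA.BoundedFormula α n) : Prop :=
  ∀ (v : α → ℕ) (xs : Fin n → ℕ), φ.Realize (num M ∘ v) (num M ∘ xs) ↔ φ.Realize v xs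

namespace IsAbsolute

theorem imp {φ ψ : LA.BoundedFormula α n} (hφ : IsAbsolute M φ) (hψ : IsAbsolute M ψ) :
    IsAbsolute M (φ ⟹ ψ) := fun v xs ↦ by
  simp [hφ v xs, hψ v xs]

theorem not {φ : LA.BoundedFormula α n} (hφ : IsAbsolute M φ) : IsAbsolute M ∼φ := fun v xs ↦ by
  simp [hφ v xs]

theorem inf {φ ψ : LA.BoundedFormula α n} (hφ : IsAbsolute M φ) (hψ : IsAbsolute M ψ) :
    IsAbsolute M (φ ⊓ ψ) := fun v xs ↦ by
  simp [hφ v xs, hψ v xs]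

end IsAbsolute

variable [ModelsR M]

theorem le_num_iff {x : M} {n : ℕ} : Le x (num M n) ↔ ∃ m ≤ n, x = num M m := by
  refine ⟨ModelsR.exists_eq_num_of_le, ?_⟩
  rintro ⟨m, hm, rfl⟩
  exact ⟨num M (n - m), by rw [ModelsR.plus_num, Nat.sub_add_cancel hm]⟩

theorem num_le_num_iff {m n : ℕ} : Le (num M m) (num M n) ↔ m ≤ n := by
  simp [le_num_iff, ModelsR.num_injective.eq_iff]

theorem realize_num_comp (t : LA.Term α) (v : α → ℕ) :
    t.realize (num M ∘ v) = num M (t.realize v) := by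
  induction t with
  | var a => rfl
  | func f ts ih =>
    simp only [Term.realize, ih]
    cases f with
    | zero | one => exact congrArg (Structure.funMap _) (Subsingleton.elim _ _)
    | add =>
      refine Eq.trans (congrArg (Structure.funMap _) ?_) (ModelsR.plus_num _ _)
      exact funext (Fin.forall_fin_two.2 ⟨rfl, rfl⟩)
    | mul =>
      refine Eq.trans (congrArg (Structure.funMap _) ?_) (ModelsR.times_num _ _)
      exact funext (Fin.forall_fin_two.2 ⟨rfl, rfl⟩)

namespace IsAbsolute

theorem equal (t s : LA.Term (α ⊕ Fin n)) : IsAbsolute M (t =' s) := fun v xs ↦ by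
  simp [← Sum.comp_elim, realize_num_comp, ModelsR.num_injective.eq_iff]

theorem le (t s : LA.Term (α ⊕ Fin n)) : IsAbsolute M (leF t s) := fun v xs ↦ by
  simp [← Sum.comp_elim, realize_num_comp, num_le_num_iff]

theorem exLe (t : LA.Term (α ⊕ Fin n)) {φ : LA.BoundedFormula α (n + 1)} (hφ : IsAbsolute M φ) :
    IsAbsolute M (exLe t φ) := fun v xs ↦ by
  have snoc_num (m : ℕ) :
      Fin.snoc (num M ∘ xs) (num M m) = num M ∘ Fin.snoc (α := fun _ ↦ ℕ) xs m :=
    (Fin.comp_snoc _ _ _).symm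
  rw [realize_exLe, realize_exLe, ← Sum.comp_elim, realize_num_comp]
  constructor
  · rintro ⟨x, hx, h⟩
    obtain ⟨m, hm, rfl⟩ := le_num_iff.1 hx
    exact ⟨m, (le_nat _ _).2 hm, (hφ v _).1 (snoc_num m ▸ h)⟩
  · rintro ⟨m, hm, h⟩
    exact ⟨num M m, num_le_num_iff.2 ((le_nat _ _).1 hm), snoc_num m ▸ (hφ v _).2 h⟩

theorem allLe (t : LA.Term (α ⊕ Fin n)) {φ : LA.BoundedFormula α (n + 1)} (hφ : IsAbsolute M φ) :
    IsAbsolute M (allLe t φ) :=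
  (hφ.not.exLe t).not

end IsAbsolute

end Absoluteness

@[simp]
theorem comp_vecEmpty {α β : Type*} (f : α → β) : f ∘ ![] = ![] :=
  Matrix.empty_eq _

@[simp]
theorem comp_vecCons {α β : Type*} {n : ℕ} (f : α → β) (a : α) (v : Fin n → α) :
    f ∘ Matrix.vecCons a v = Matrix.vecCons (f a) (f ∘ v) :=
  Fin.comp_cons _ _ _

section Representability

/-- From a formula `θ(x, w, u)` saying that `u` witnesses `f(x) = w`, the formula
saying that for some `u ≥ w`, `u` witnesses `f(x) = w` and no `p < u` witnesses `f(x) = r` for any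
`r ≤ p`. It defines the graph of `f` in every model of `R`, in which `θ` alone may have nonstandard
witnesses for wrong values. -/
def leastWitness (θ : LA.Formula (Fin 3)) : LA.Formula (Fin 2) :=
  let x {n : ℕ} : LA.Term (Fin 2 ⊕ Fin n) := free 0
  let w : LA.Term (Fin 2 ⊕ Fin 1) := free 1
  ∃' (instantiate θ ![x, w, &0] ⊓ leF w &0 ⊓
    allLe &0 (∼(&1 =' &0) ⟹ allLe &1 ∼(instantiate θ ![x, &2, &1])))

variable {M : Type*} [LA.Structure M]

theorem realize_leastWitness {θ : LA.Formula (Fin 3)} {v : Fin 2 → M} :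
    (leastWitness θ).Realize v ↔ ∃ u, θ.Realize ![v 0, v 1, u] ∧ Le (v 1) u ∧
      ∀ p, Le p u → p ≠ u → ∀ r, Le r p → ¬ θ.Realize ![v 0, r, p] := by
  simp [leastWitness, Formula.Realize, Fin.snoc, and_assoc]

theorem IsAbsolute.formula_realize {n : ℕ} {θ : LA.Formula (Fin n)} (hθ : IsAbsolute M θ)
    (v : Fin n → ℕ) : θ.Realize (num M ∘ v) ↔ θ.Realize v := by
  rw [Formula.Realize, Formula.Realize, ← hθ]
  exact iff_of_eq (congrArg (BoundedFormula.Realize θ _) (Subsingleton.elim _ _))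

theorem leastWitness_iff_eq_num [ModelsR M] {θ : LA.Formula (Fin 3)} (hθ : IsAbsolute M θ)
    {n k : ℕ} (exists_witness : ∃ u, k ≤ u ∧ θ.Realize ![n, k, u])
    (functional : ∀ w u, θ.Realize ![n, w, u] → w = k) (y : M) :
    (leastWitness θ).Realize ![num M n, y] ↔ y = num M k := by
  classical
  have absolute (w u : ℕ) : θ.Realize ![num M n, num M w, num M u] ↔ θ.Realize ![n, w, u] := by
    simpa using hθ.formula_realize ![n, w, u]
  obtain ⟨hk, hu⟩ := Nat.find_spec exists_witness
  have minimal := fun m ↦ Nat.find_min exists_witness (m := m)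
  generalize Nat.find exists_witness = u₀ at hk hu minimal
  rw [realize_leastWitness]
  simp only [Matrix.cons_val_zero, Matrix.cons_val_one]
  constructor
  · rintro ⟨u, hyu, hle, hleast⟩
    have u_le : Le u (num M u₀) := by
      rcases eq_or_ne (num M u₀) u with rfl | hne
      · exact num_le_num_iff.2 le_rfl
      · exact (ModelsR.le_total u u₀).resolve_right fun h ↦
          hleast _ h hne _ (num_le_num_iff.2 hk) ((absolute _ _).2 hu)
    obtain ⟨u, -, rfl⟩ := le_num_iff.1 u_le
    obtain ⟨w, -, rfl⟩ := le_num_iff.1 hle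
    rw [functional w u ((absolute w u).1 hyu)]
  · rintro rfl
    refine ⟨num M u₀, (absolute _ _).2 hu, num_le_num_iff.2 hk, ?_⟩
    rintro p hp hne r hr h
    obtain ⟨p, hpu, rfl⟩ := le_num_iff.1 hp
    obtain ⟨r, hrp, rfl⟩ := le_num_iff.1 hr
    rw [absolute] at h
    obtain rfl := functional r p h
    exact minimal p (hpu.lt_of_ne fun h ↦ hne (h ▸ rfl)) ⟨hrp, h⟩

end Representability

section Iteration

/-- The formula expressing `Nat.beta (Nat.pair s t) i = a`, that is, that `a` is the remainder of
`s` modulo `(i + 1) * t + 1`. -/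
def betaF {α : Type} {n : ℕ} (s t i a : LA.Term (α ⊕ Fin n)) : LA.BoundedFormula α n :=
  let bound := mulT (succT (lift i)) (lift t)
  exLe s (lift s =' addT (mulT (Term.var (Sum.inr (Fin.last n))) (succT bound)) (lift a) ⊓
    leF (lift a) bound)

/-- The formula `θ(x, w, u)` saying that, with `a ↦ step(a)` iterated from `a₀`, the `x`-th iterate
is `w` and the sequence of iterates up to `x` is coded below `u` by Gödel's `β`-function. -/
def iterGraph (step : LA.Term (Empty ⊕ Fin 1)) (a₀ : ℕ) : LA.Formula (Fin 3) :=
  let x {n : ℕ} : LA.Term (Fin 3 ⊕ Fin n) := free 0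
  let w {n : ℕ} : LA.Term (Fin 3 ⊕ Fin n) := free 1
  let u {n : ℕ} : LA.Term (Fin 3 ⊕ Fin n) := free 2
  exLe u (exLe u (betaF &0 &1 zeroT (numeral _ a₀) ⊓ betaF &0 &1 x w ⊓
    allLe x (leF (succT &2) x ⟹
      exLe u (betaF &0 &1 &2 &3 ⊓
        betaF &0 &1 (succT &2) (step.subst (Sum.elim Empty.elim ![&3]))))))

theorem realize_betaF {α : Type} {n : ℕ} (s t i a : LA.Term (α ⊕ Fin n)) (v : α → ℕ)
    (xs : Fin n → ℕ) :
    (betaF s t i a).Realize v xs ↔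
      Nat.beta (Nat.pair (s.realize (Sum.elim v xs)) (t.realize (Sum.elim v xs)))
        (i.realize (Sum.elim v xs)) = a.realize (Sum.elim v xs) := by
  simp only [betaF, realize_exLe, BoundedFormula.realize_inf, BoundedFormula.realize_bdEqual,
    realize_lift, realize_addT, realize_mulT, realize_succT, realize_leF, Term.realize_var,
    Sum.elim_inr, Fin.snoc_last, num_nat, plus_nat, times_nat, le_nat, Nat.beta, Nat.unpair_pair]
  generalize s.realize (Sum.elim v xs) = s, t.realize (Sum.elim v xs) = t,
    i.realize (Sum.elim v xs) = i, a.realize (Sum.elim v xs) = a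
  constructor
  · rintro ⟨q, -, rfl, ha⟩
    rw [Nat.mul_comm q, Nat.mul_add_mod, Nat.mod_eq_of_lt (Nat.lt_succ_of_le ha)]
  · rintro rfl
    exact ⟨s / ((i + 1) * t + 1), Nat.div_le_self _ _, (Nat.div_add_mod' _ _).symm,
      Nat.le_of_lt_succ (Nat.mod_lt _ (Nat.succ_pos _))⟩

theorem IsAbsolute.betaF {M : Type*} [LA.Structure M] [ModelsR M] {α : Type} {n : ℕ}
    (s t i a : LA.Term (α ⊕ Fin n)) : IsAbsolute M (betaF s t i a) :=
  .exLe _ ((IsAbsolute.equal _ _).inf (.le _ _))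

theorem exists_forall_beta_eq (f : ℕ → ℕ) (n : ℕ) :
    ∃ s t, ∀ i ≤ n, Nat.beta (Nat.pair s t) i = f i := by
  let l := (List.range (n + 1)).map f
  refine ⟨(Nat.unbeta l).unpair.1, (Nat.unbeta l).unpair.2, fun i hi ↦ ?_⟩
  have hil : i < l.length := by simpa [l] using Nat.lt_succ_of_le hi
  rw [Nat.pair_unpair, Nat.beta_unbeta_coe l ⟨i, hil⟩]
  simp [l]

theorem beta_pair_le (s t i : ℕ) : Nat.beta (Nat.pair s t) i ≤ s := by
  rw [Nat.beta, Nat.unpair_pair]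
  exact Nat.mod_le _ _

section IterGraph

variable {step : LA.Term (Empty ⊕ Fin 1)} {g : ℕ → ℕ} {a₀ x w u : ℕ}

theorem IsAbsolute.iterGraph {M : Type*} [LA.Structure M] [ModelsR M] :
    IsAbsolute M (iterGraph step a₀) :=
  .exLe _ <| .exLe _ <| .inf (.inf (.betaF _ _ _ _) (.betaF _ _ _ _)) <|
    .allLe _ <| .imp (.le _ _) <| .exLe _ <| .inf (.betaF _ _ _ _) (.betaF _ _ _ _)

theorem realize_iterGraph (hg : ∀ a, step.realize (Sum.elim Empty.elim ![a]) = g a) :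
    (iterGraph step a₀).Realize ![x, w, u] ↔ ∃ s ≤ u, ∃ t ≤ u,
      Nat.beta (Nat.pair s t) 0 = a₀ ∧ Nat.beta (Nat.pair s t) x = w ∧
      ∀ i < x, Nat.beta (Nat.pair s t) i ≤ u ∧
        Nat.beta (Nat.pair s t) (i + 1) = g (Nat.beta (Nat.pair s t) i) := by
  have realize_step (v : Fin 3 ⊕ Fin 4 → ℕ) (t : LA.Term (Fin 3 ⊕ Fin 4)) :
      (step.subst (Sum.elim Empty.elim ![t])).realize v = g (t.realize v) := by
    rw [Term.realize_subst, ← hg]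
    congr 1
    exact funext (Sum.rec (fun e ↦ e.elim) (Fin.forall_fin_one.2 rfl))
  have le_lt_imp (i : ℕ) (p : Prop) : (i ≤ x → i < x → p) ↔ (i < x → p) :=
    ⟨fun h hi ↦ h hi.le hi, fun h _ ↦ h⟩
  simp [iterGraph, Formula.Realize, realize_betaF, realize_step, le_lt_imp,
    and_assoc, Fin.snoc, -Term.realize_subst]

theorem eq_iterate_of_iterGraph (hg : ∀ a, step.realize (Sum.elim Empty.elim ![a]) = g a)
    (h : (iterGraph step a₀).Realize ![x, w, u]) : w = g^[x] a₀ := by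
  obtain ⟨s, -, t, -, h₀, rfl, h_step⟩ := (realize_iterGraph hg).1 h
  have beta_eq (i : ℕ) (hi : i ≤ x) : Nat.beta (Nat.pair s t) i = g^[i] a₀ := by
    induction i with
    | zero => exact h₀
    | succ i ih => rw [(h_step i hi).2, ih (Nat.le_of_succ_le hi), Function.iterate_succ_apply']
  exact beta_eq x le_rfl

theorem exists_iterGraph (hg : ∀ a, step.realize (Sum.elim Empty.elim ![a]) = g a) (a₀ x : ℕ) :
    ∃ u, g^[x] a₀ ≤ u ∧ (iterGraph step a₀).Realize ![x, g^[x] a₀, u] := by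
  obtain ⟨s, t, beta_eq⟩ := exists_forall_beta_eq (fun i ↦ g^[i] a₀) x
  refine ⟨s + t, (beta_eq x le_rfl).symm.trans_le ((beta_pair_le s t x).trans (by simp)), ?_⟩
  refine (realize_iterGraph hg).2
    ⟨s, by simp, t, by simp, beta_eq 0 x.zero_le, beta_eq x le_rfl, fun i hi ↦ ?_⟩
  refine ⟨(beta_pair_le s t i).trans (by simp), ?_⟩
  rw [beta_eq i hi.le, beta_eq (i + 1) hi, Function.iterate_succ_apply']

theorem leastWitness_iterGraph {M : Type*} [LA.Structure M] [ModelsR M]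
    (hg : ∀ a, step.realize (Sum.elim Empty.elim ![a]) = g a) (n : ℕ) (y : M) :
    (leastWitness (iterGraph step a₀)).Realize ![num M n, y] ↔ y = num M (g^[n] a₀) :=
  leastWitness_iff_eq_num .iterGraph (exists_iterGraph hg a₀ n)
    (fun _ _ ↦ eq_iterate_of_iterGraph hg) y

end IterGraph

end Iteration

section Codes

open Encodable

section Lists

variable {σ : Type*} [Encodable σ] {x : σ} {l : List σ}

theorem encode_cons_of_lt (h : encode x < encode l) :
    encode (x :: l) = encode l * encode l + (encode x + 1) := by
  rw [encode_list_cons, Nat.pair, if_pos h]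
  rfl

theorem encode_cons_of_le (h : encode l ≤ encode x) :
    encode (x :: l) = encode x * encode x + encode x + (encode l + 1) := by
  rw [encode_list_cons, Nat.pair, if_neg h.not_gt]
  rfl

variable (x l) in
theorem encode_lt_encode_cons : encode l < encode (x :: l) :=
  Nat.lt_succ_of_le (Nat.right_le_pair _ _)

end Lists

variable {α : Type} {n : ℕ}

/-- The code of the list with head of code `c` and tail of code `b`, as a term in `b`; it is correct
for `c < b`. -/
def consT (c : ℕ) (b : LA.Term (α ⊕ Fin n)) : LA.Term (α ⊕ Fin n) :=
  addT (mulT b b) (numeral _ (c + 1))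

@[simp]
theorem realize_consT_nat (c : ℕ) (b : LA.Term (α ⊕ Fin n))
    (v : α ⊕ Fin n → ℕ) : (consT c b).realize v = b.realize v * b.realize v + (c + 1) := by
  simp [consT]

/-- Numerals starting from `0 + 0` instead of `0`. With this base every code exceeds `3`, so that
prefixing `1 +` always acts on codes by the same polynomial. -/
def paddedNumeral : ℕ → LA.Term (α ⊕ Fin n)
  | 0 => addT zeroT zeroT
  | k + 1 => addT (numeral _ 1) (paddedNumeral k)

/-- The effect of prefixing `1 +` to a term on its code, as a term; the symbols `+` and `1` have the
codes `5` and `3`. -/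
def oneAddCodeT (b : LA.Term (α ⊕ Fin n)) : LA.Term (α ⊕ Fin n) :=
  consT 5 (consT 3 b)

/-- The value of `oneAddCodeT` in `ℕ`. -/
def oneAddCode (b : ℕ) : ℕ :=
  (b * b + 4) * (b * b + 4) + 6

@[simp]
theorem realize_oneAddCodeT_nat (b : LA.Term (α ⊕ Fin n)) (v : α ⊕ Fin n → ℕ) :
    (oneAddCodeT b).realize v = oneAddCode (b.realize v) := by
  simp [oneAddCodeT, oneAddCode]

/-- The code of `paddedNumeral k`, computed by iteration from the code `127` of `0 + 0`. -/
def paddedNumeralCode (k : ℕ) : ℕ :=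
  oneAddCode^[k] 127

theorem paddedNumeralCode_succ (k : ℕ) :
    paddedNumeralCode (k + 1) = oneAddCode (paddedNumeralCode k) :=
  Function.iterate_succ_apply' _ _ _

theorem add_le_paddedNumeralCode (k : ℕ) : k + 127 ≤ paddedNumeralCode k := by
  induction k with
  | zero => rfl
  | succ k ih =>
    rw [paddedNumeralCode_succ, oneAddCode]
    nlinarith

theorem realize_paddedNumeral {M : Type*} [LA.Structure M] [ModelsR M] (v : α ⊕ Fin n → M)
    (k : ℕ) : (paddedNumeral k).realize v = num M k := by
  induction k with
  | zero => rw [paddedNumeral, realize_addT, realize_zeroT, ModelsR.plus_num]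
  | succ k ih =>
    rw [paddedNumeral, realize_addT, realize_numeral, ih, ModelsR.plus_num, Nat.add_comm]

theorem listEncode_addT (t s : LA.Term (α ⊕ Fin n)) :
    (addT t s).listEncode = Sum.inr ⟨2, ArithFunc.add⟩ :: (t.listEncode ++ s.listEncode) := by
  simp [addT, Functions.apply₂, Term.listEncode, List.finRange_succ]

theorem listEncode_constant (c : ArithFunc 0) :
    (Constants.term (L := LA) c : LA.Term (α ⊕ Fin n)).listEncode = [Sum.inr ⟨0, c⟩] := by
  simp [Constants.term, Term.listEncode]

theorem encode_paddedNumeral [Encodable α] (k : ℕ) :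
    encode (paddedNumeral k : LA.Term (α ⊕ Fin n)).listEncode = paddedNumeralCode k := by
  induction k with
  | zero =>
    rw [paddedNumeral, listEncode_addT, zeroT, listEncode_constant]
    rfl
  | succ k ih =>
    let add : (α ⊕ Fin n) ⊕ (Σ i, LA.Functions i) := Sum.inr ⟨2, ArithFunc.add⟩
    let one : (α ⊕ Fin n) ⊕ (Σ i, LA.Functions i) := Sum.inr ⟨0, ArithFunc.one⟩
    have listEncode_eq : (paddedNumeral (k + 1)).listEncode =
        add :: one :: (paddedNumeral k).listEncode := by
      rw [paddedNumeral, listEncode_addT, numeral, listEncode_constant]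
      rfl
    have encode_add : encode add = 5 := rfl
    have encode_one : encode one = 3 := rfl
    have bound := add_le_paddedNumeralCode k
    have encode_tail : encode (one :: (paddedNumeral k).listEncode) =
        paddedNumeralCode k * paddedNumeralCode k + 4 := by
      have lt : encode one < encode (paddedNumeral k : LA.Term (α ⊕ Fin n)).listEncode := by
        rw [ih, encode_one]
        linarith
      rw [encode_cons_of_lt lt, ih, encode_one]
    rw [listEncode_eq, encode_cons_of_lt, encode_tail, encode_add, paddedNumeralCode_succ,
      oneAddCode]
    rw [encode_tail, encode_add]
    nlinarith

end Codes

section Diagonal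

open Encodable

/-- The sentence saying of `φ(x)` that it holds of its own code. -/
def diagonalization (φ : LA.BoundedFormula Empty 1) : LA.Sentence :=
  ∀' (&0 =' paddedNumeral (encode φ.listEncode) ⟹ φ)

/-- The code of `diagonalization φ`, as a term in the code `&0` of `φ` and the code `&1` of the
padded numeral for `&0`; the heads `7`, `3` and `100` are the codes of `∀`, `⟹` and the variable in
the list encoding of the sentence. -/
def diagonalCodeT : LA.Term (Empty ⊕ Fin 2) :=
  let pairCode := mulT (numeral _ 2) (addT (mulT &1 &1) (numeral _ 1))
  consT 7 (consT 3 (consT 100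
    (addT (addT (mulT pairCode pairCode) pairCode) (addT &0 (numeral _ 1)))))

theorem godelCode_diagonalization (φ : LA.BoundedFormula Empty 1) :
    godelCode (diagonalization φ) = diagonalCodeT.realize (Sum.elim Empty.elim
      ![encode φ.listEncode, paddedNumeralCode (encode φ.listEncode)]) := by
  set n := encode φ.listEncode
  let Symbol := (Σ k, LA.Term (Empty ⊕ Fin k)) ⊕ (Σ k, LA.Relations k) ⊕ ℕ
  let forallSymbol : Symbol := Sum.inr (Sum.inr 1)
  let impSymbol : Symbol := Sum.inr (Sum.inr 0)
  let lhs : Symbol := Sum.inl ⟨1, Term.var (Sum.inr 0)⟩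
  let rhs : Symbol := Sum.inl ⟨1, paddedNumeral n⟩
  have listEncode_eq : (diagonalization φ).listEncode =
      forallSymbol :: impSymbol :: lhs :: rhs :: φ.listEncode := rfl
  have encode_forall : encode forallSymbol = 7 := rfl
  have encode_imp : encode impSymbol = 3 := rfl
  have encode_lhs : encode lhs = 100 := rfl
  have bound := add_le_paddedNumeralCode n
  have encode_rhs : encode rhs = 2 * (paddedNumeralCode n * paddedNumeralCode n + 1) := by
    have encode_inl : encode rhs =
        2 * Nat.pair 1 (encode (paddedNumeral n : LA.Term (Empty ⊕ Fin 1)).listEncode) := rfl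
    rw [encode_inl, encode_paddedNumeral, Nat.pair, if_pos (by linarith)]
  have encode_rhs_cons : encode (rhs :: φ.listEncode) =
      encode rhs * encode rhs + encode rhs + (n + 1) := by
    refine encode_cons_of_le ?_
    rw [encode_rhs]
    nlinarith
  have lt_rhs_cons : 100 < encode (rhs :: φ.listEncode) := by
    rw [encode_rhs_cons, encode_rhs]
    nlinarith
  have lt_lhs_cons := lt_rhs_cons.trans (encode_lt_encode_cons lhs _)
  have lt_imp_cons := lt_lhs_cons.trans (encode_lt_encode_cons impSymbol _)
  rw [godelCode, listEncode_eq, encode_cons_of_lt (by omega), encode_cons_of_lt (by omega),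
    encode_cons_of_lt (by omega), encode_rhs_cons, encode_rhs, encode_forall, encode_imp,
    encode_lhs]
  simp [diagonalCodeT]

/-- The formula in `x` saying that `Φ` holds of the code of the diagonalization of the formula with
code `x`. -/
def diagonalFormula (Φ : LA.Formula (Fin 1)) : LA.BoundedFormula Empty 1 :=
  ∃' (instantiate (leastWitness (iterGraph (oneAddCodeT &0) 127)) ![&0, &1] ⊓
    instantiate Φ ![diagonalCodeT])

variable {M : Type*} [LA.Structure M]

theorem realize_diagBicond (Ψ : LA.Formula (Fin 1)) (β : LA.Sentence) :
    M ⊨ diagBicond Ψ β ↔ (Ψ.Realize ![num M (godelCode β)] ↔ M ⊨ β) := by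
  have singleton_eq (x : M) : (fun _ ↦ x) = ![x] := funext (Fin.forall_fin_one.2 rfl)
  simp [diagBicond, Sentence.Realize, Formula.Realize, BoundedFormula.realize_subst, singleton_eq]

variable [ModelsR M]

theorem realize_diagonalization (φ : LA.BoundedFormula Empty 1) :
    M ⊨ diagonalization φ ↔ φ.Realize Empty.elim ![num M (encode φ.listEncode)] := by
  have snoc_eq (a : M) : Fin.snoc default a = ![a] := funext (Fin.forall_fin_one.2 rfl)
  simp [diagonalization, Sentence.Realize, Formula.Realize, realize_paddedNumeral, snoc_eq,
    Subsingleton.elim default Empty.elim]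

theorem realize_diagonalFormula (Φ : LA.Formula (Fin 1)) (n : ℕ) :
    (diagonalFormula Φ).Realize Empty.elim ![num M n] ↔ Φ.Realize ![num M (diagonalCodeT.realize
      (Sum.elim Empty.elim ![n, paddedNumeralCode n]))] := by
  have realize_graph (y : M) : (leastWitness (iterGraph (oneAddCodeT (Term.var (Sum.inr 0)))
      127)).Realize ![num M n, y] ↔ y = num M (paddedNumeralCode n) :=
    leastWitness_iterGraph (fun _ ↦ realize_oneAddCodeT_nat _ _) n y
  have realize_code : diagonalCodeT.realize
        (Sum.elim Empty.elim ![num M n, num M (paddedNumeralCode n)]) =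
      num M (diagonalCodeT.realize (Sum.elim Empty.elim ![n, paddedNumeralCode n])) := by
    rw [← realize_num_comp, Sum.comp_elim]
    simp [Subsingleton.elim (num M ∘ Empty.elim) Empty.elim]
  simp [diagonalFormula, realize_graph, realize_code]

theorem exists_diagonal (Φ : LA.Formula (Fin 1)) :
    ∃ β : LA.Sentence, ∀ (M : Type*) [LA.Structure M] [ModelsR M],
      M ⊨ β ↔ Φ.Realize ![num M (godelCode β)] := by
  refine ⟨diagonalization (diagonalFormula Φ), fun M _ _ ↦ ?_⟩
  rw [realize_diagonalization, realize_diagonalFormula, godelCode_diagonalization]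

end Diagonal

end Tarski

theorem stmt16_general (T : LA.Theory) (hR : ∀ M : Theory.ModelType.{0, 0, 0} T, Tarski.ModelsR M)
    (hcons : Consistent T) :
    ∀ Ψ : LA.Formula (Fin 1), ¬ ∀ β : LA.Sentence, T ⊨ᵇ diagBicond Ψ β := by
  intro Ψ h
  obtain ⟨β, hβ⟩ := Tarski.exists_diagonal (∼Ψ)
  refine hcons (Theory.models_sentence_iff.2 fun M ↦ ?_)
  have := hR M
  have bicond := (Tarski.realize_diagBicond Ψ β).1 ((h β).realize_sentence M)
  rw [hβ M, Formula.realize_not] at bicond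
  exact (iff_not_self bicond).elim

/-- **Syntactic Tarski's Theorem.** If `T` is a consistent extension of
Robinson's arithmetic, then for no formula `Ψ(x)` does `T` contain (prove) the
set `TB^Ψ` of all truth biconditionals `Ψ(⌜β⌝) ↔ β`. -/
theorem stmt16 (T : LA.Theory) (hQ : Q ⊆ T) (hcons : Consistent T) :
    ∀ Ψ : LA.Formula (Fin 1), ¬ ∀ β : LA.Sentence, T ⊨ᵇ diagBicond Ψ β :=
  stmt16_general T (fun M ↦ Tarski.modelsR_of_models_Q (M.is_model.mono hQ)) hcons
end
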